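/- The Haar measure μ_{S_N} of the solenoid S_N is invariant under the shift S, and S is ergodic with respect to μ_{S_N}; consequently, the representation π_{μ_{S_N},1} of BS(1,N) (with θ ≡ 1) on L²(μ_{S_N}) is irreducible. -/

import Mathlib

noncomputable section

open MeasureTheory Real Complex Filter Finset
open scoped ENNReal

/-! ### Basic instances for the circle -/

instance : MeasurableSpace Circle := borel Circle
instance : BorelSpace Circle := ⟨rfl⟩

/-- The point `e^{-2πit}` of the unit circle. -/
def ee (t : ℝ) : Circle := Circle.exp (-(2 * π * t))

/-- Normalized Lebesgue measure on the circle, realized as the image of Lebesgue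
measure on `[0,1)` under `t ↦ e^{-2πit}`. -/
def circleMeasure : Measure Circle := (volume.restrict (Set.Ico (0:ℝ) 1)).map ee

/-! ### The Baumslag–Solitar group `BS(1,N)` -/

/-- The single relation `u t u⁻¹ (t^N)⁻¹` defining `BS(1,N)`. -/
def BSRel (N : ℕ) : Set (FreeGroup Bool) :=
  {FreeGroup.of true * FreeGroup.of false * (FreeGroup.of true)⁻¹ * ((FreeGroup.of false) ^ N)⁻¹}

/-- The Baumslag–Solitar group `BS(1,N) = ⟨u,t | u t u⁻¹ = t^N⟩`. -/
abbrev BS (N : ℕ) := PresentedGroup (BSRel N)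

/-- The generator `u` of `BS(1,N)`. -/
def BS.u (N : ℕ) : BS N := PresentedGroup.of true

/-- The generator `t` of `BS(1,N)`. -/
def BS.t (N : ℕ) : BS N := PresentedGroup.of false

/-! ### The solenoid -/

/-- The `N`-solenoid, as a subgroup of the product of circles indexed by `ℤ`:
all sequences `(z_n)` with `z_{n+1}^N = z_n`. -/
def solenoidGroup (N : ℕ) : Subgroup (ℤ → Circle) where
  carrier := {z | ∀ n : ℤ, z (n + 1) ^ N = z n}
  one_mem' := by intro n; simp
  mul_mem' := by
    intro a b ha hb n
    simp only [Set.mem_setOf_eq, Pi.mul_apply, mul_pow] at *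
    rw [ha n, hb n]
  inv_mem' := by
    intro a ha n
    simp only [Set.mem_setOf_eq, Pi.inv_apply, inv_pow] at *
    rw [ha n]

/-- The `N`-solenoid as a type. -/
abbrev Solenoid (N : ℕ) := ↥(solenoidGroup N)

/-- The shift `S` on the solenoid: `(S z)_n = z_{n-1}`. -/
def shift (N : ℕ) (z : Solenoid N) : Solenoid N :=
  ⟨fun n => z.val (n - 1), by
    intro n
    have h := z.property (n - 1)
    simpa using h⟩

/-- The inverse `S⁻¹` of the shift on the solenoid: `(S⁻¹ z)_n = z_{n+1}`. -/
def shiftInv (N : ℕ) (z : Solenoid N) : Solenoid N :=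
  ⟨fun n => z.val (n + 1), fun n => z.property (n + 1)⟩

/-- Integer powers `Sⁿ` of the shift. -/
def shiftZ (N : ℕ) (n : ℤ) : Solenoid N → Solenoid N :=
  if 0 ≤ n then (shift N)^[n.toNat] else (shiftInv N)^[(-n).toNat]

/-- The measure `ν ∘ S`, defined by `(ν ∘ S)(E) = ν(S(E))`. -/
def measShift (N : ℕ) (ν : Measure (Solenoid N)) : Measure (Solenoid N) :=
  ν.map (shiftInv N)

/-- `ν` is quasi-invariant for the shift `S`: `ν ∘ S` and `ν` are mutually
absolutely continuous. -/
def QuasiInvariant (N : ℕ) (ν : Measure (Solenoid N)) : Prop :=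
  measShift N ν ≪ ν ∧ ν ≪ measShift N ν

/-- The shift `S` is ergodic with respect to `ν`. -/
def ShiftErgodic (N : ℕ) (ν : Measure (Solenoid N)) : Prop :=
  ∀ E : Set (Solenoid N), MeasurableSet E → shift N ⁻¹' E = E → ν E = 0 ∨ ν Eᶜ = 0

/-- A bounded measurable (`L^∞`-type) function. -/
def BddMeasurable {α : Type*} [MeasurableSpace α] (f : α → ℂ) : Prop :=
  Measurable f ∧ ∃ C : ℝ, ∀ x, ‖f x‖ ≤ C

/-! ### The representation `π_{ν,θ}` -/

/-- The pair of unitaries `U, T` on `L²(ν)` given by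
`Uξ = √Δ ⬝ θ ⬝ (ξ∘S)` (with `Δ = d(ν∘S)/dν`) and `(Tξ)(z) = z₀ ξ(z)`. -/
def IsPiNuTheta (N : ℕ) (ν : Measure (Solenoid N)) (θ : Solenoid N → Circle)
    (U T : unitary (Lp ℂ 2 ν →L[ℂ] Lp ℂ 2 ν)) : Prop :=
  (∀ ξ : Lp ℂ 2 ν,
      (((U : Lp ℂ 2 ν →L[ℂ] Lp ℂ 2 ν) ξ : Lp ℂ 2 ν) : Solenoid N → ℂ) =ᵐ[ν]
        fun z => (Real.sqrt (((measShift N ν).rnDeriv ν z).toReal) : ℂ) * (θ z : ℂ) *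
          (ξ : Solenoid N → ℂ) (shift N z)) ∧
  (∀ ξ : Lp ℂ 2 ν,
      (((T : Lp ℂ 2 ν →L[ℂ] Lp ℂ 2 ν) ξ : Lp ℂ 2 ν) : Solenoid N → ℂ) =ᵐ[ν]
        fun z => ((z.val 0 : Circle) : ℂ) * (ξ : Solenoid N → ℂ) z)

/-- `φ` is a cyclic vector for the (unitary) representation generated by `U` and `T`:
the only closed subspace containing `φ` and invariant under the group generated by
`U` and `T` is the whole space. -/
def cyclicVector {H : Type*} [NormedAddCommGroup H] [InnerProductSpace ℂ H]
    [CompleteSpace H] (U T : unitary (H →L[ℂ] H)) (φ : H) : Prop :=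
  ∀ K : Submodule ℂ H, IsClosed (K : Set H) → φ ∈ K →
    (∀ g ∈ Subgroup.closure ({U, T} : Set (unitary (H →L[ℂ] H))),
      ∀ v ∈ K, (g : H →L[ℂ] H) v ∈ K) → K = ⊤

/-! ### Filters and the Ruelle operator -/

/-- The quadrature mirror filter condition `R_{m₀} 1 = 1`, written out on `[0,1)`:
`(1/N) ∑_{k<N} |m₀(e^{-2πi(x+k)/N})|² = 1` for a.e. `x`. -/
def QMF (N : ℕ) (m₀ : Circle → ℂ) : Prop :=
  ∀ᵐ x ∂(volume.restrict (Set.Ico (0:ℝ) 1)),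
    (1 / N : ℝ) * ∑ k ∈ Finset.range N, ‖m₀ (ee ((x + k) / N))‖ ^ 2 = 1

/-- `h` is a fixed point of the Ruelle operator `R_{m₀}`:
`(1/N) ∑_{w^N = z} |m₀(w)|² h(w) = h(z)` for a.e. `z`, written out on `[0,1)`. -/
def RuelleFixed (N : ℕ) (m₀ : Circle → ℂ) (h : Circle → ℂ) : Prop :=
  ∀ᵐ x ∂(volume.restrict (Set.Ico (0:ℝ) 1)),
    (1 / N : ℂ) * ∑ k ∈ Finset.range N,
        (‖m₀ (ee ((x + k) / N))‖ ^ 2 : ℝ) * h (ee ((x + k) / N)) = h (ee x)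

/-- The wavelet representation of `BS(1,N)` associated to a filter `m₀`, realized
on `L²(m)` for a measure `m` on the solenoid: `Uξ = m₀ ⬝ (ξ∘S)` and `T` is
multiplication by the coordinate `z₀`. -/
def IsWaveletRepOn (N : ℕ) (m₀ : Circle → ℂ) (m : Measure (Solenoid N))
    (U T : unitary (Lp ℂ 2 m →L[ℂ] Lp ℂ 2 m)) : Prop :=
  (∀ ξ : Lp ℂ 2 m,
      (((U : Lp ℂ 2 m →L[ℂ] Lp ℂ 2 m) ξ : Lp ℂ 2 m) : Solenoid N → ℂ) =ᵐ[m]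
        fun z => m₀ (z.val 0) * (ξ : Solenoid N → ℂ) (shift N z)) ∧
  (∀ ξ : Lp ℂ 2 m,
      (((T : Lp ℂ 2 m →L[ℂ] Lp ℂ 2 m) ξ : Lp ℂ 2 m) : Solenoid N → ℂ) =ᵐ[m]
        fun z => ((z.val 0 : Circle) : ℂ) * (ξ : Solenoid N → ℂ) z)

/-- The measure `m` on the solenoid associated to a weight `W` (with `N W = |m₀|²`):
its `z₀`-marginal is normalized Lebesgue measure on the circle, and
`d(m∘S)/dm = N W`. -/
def IsAssociatedMeasure (N : ℕ) (W : Circle → ℝ) (m : Measure (Solenoid N)) : Prop :=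
  IsProbabilityMeasure m ∧
  m.map (fun z : Solenoid N => z.val 0) = circleMeasure ∧
  measShift N m = m.withDensity (fun z => ENNReal.ofReal (N * W (z.val 0)))

end

/-!
The shift on the solenoid is the power map `z ↦ z ^ N`, so it acts on characters by `χ ↦ χ ^ N`.
The characters `z ↦ z n ^ k` separate points and have infinite order unless trivial, so every
nontrivial one has an infinite orbit. The Fourier coefficients of a shift-invariant `L²` function
are constant along orbits, hence vanish off the trivial character by Bessel's inequality: this is
ergodicity.

For irreducibility, let `P` be the projection onto a closed invariant subspace. The powers of `U`
conjugate `T` to multiplication by each coordinate `z n`, so `P` commutes with multiplication by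
the characters and is therefore multiplication by the function `P 1`. As `P` commutes with `U`,
this function is shift-invariant, hence constant by ergodicity.
-/

noncomputable section

open MeasureTheory Filter
open scoped ENNReal

theorem commute_iff_of_semiconjBy_unit {M : Type*} [Monoid M] {a x y : M} {u : Mˣ}
    (hau : Commute a u) (hxy : SemiconjBy (u : M) x y) : Commute a x ↔ Commute a y := by
  have hx : u * (a * x) = a * y * u := by rw [← mul_assoc, ← hau.eq, mul_assoc, hxy.eq, mul_assoc]
  have hy : u * (x * a) = y * a * u := by rw [← mul_assoc, hxy.eq, mul_assoc, ← hau.eq, mul_assoc]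
  rw [commute_iff_eq, commute_iff_eq, ← Units.mul_right_inj u, hx, hy, Units.mul_left_inj]

section Projection

variable {𝕜 H : Type*} [RCLike 𝕜] [NormedAddCommGroup H] [InnerProductSpace 𝕜 H]

theorem commute_starProjection [CompleteSpace H] {K : Submodule 𝕜 H} [K.HasOrthogonalProjection]
    {A : H →L[𝕜] H} (hA : ∀ v ∈ K, A v ∈ K) (hA' : ∀ v ∈ K, A.adjoint v ∈ K) :
    Commute K.starProjection A := by
  rw [ContinuousLinearMap.IsIdempotentElem.commute_iff K.isIdempotentElem_starProjection,
    Submodule.range_starProjection, Submodule.ker_starProjection]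
  exact ⟨hA, ContinuousLinearMap.orthogonal_mem_invtSubmodule hA'⟩

theorem eq_bot_or_eq_top_of_starProjection_eq_smul {K : Submodule 𝕜 H}
    [K.HasOrthogonalProjection] {c : 𝕜} (h : ∀ v, K.starProjection v = c • v) :
    K = ⊥ ∨ K = ⊤ := by
  rcases eq_or_ne c 0 with rfl | hc
  · refine .inl ((Submodule.eq_bot_iff K).mpr fun v hv => ?_)
    rw [← Submodule.starProjection_eq_self_iff.mpr hv, h, zero_smul]
  · refine .inr (Submodule.eq_top_iff'.mpr fun v => (K.smul_mem_iff hc).mp ?_)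
    exact h v ▸ K.starProjection_apply_mem v

end Projection

theorem eventuallyConst_set_ae_iff {X : Type*} [MeasurableSpace X] {ν : Measure X} {s : Set X} :
    EventuallyConst s (ae ν) ↔ ν s = 0 ∨ ν sᶜ = 0 := by
  rw [eventuallyConst_set, measure_eq_zero_iff_ae_notMem, or_comm]
  rfl

section Multiplication

variable {X : Type*} [TopologicalSpace X] [CompactSpace X] [MeasurableSpace X] [BorelSpace X]
  (ν : Measure X) [IsFiniteMeasure ν]

/-- Multiplication by a continuous function, as an operator on `L²(ν)`. -/
def mulLp (φ : C(X, ℂ)) : Lp ℂ 2 ν →L[ℂ] Lp ℂ 2 ν :=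
  (ContinuousLinearMap.mul ℂ ℂ).holderL ν ∞ 2 2 (ContinuousMap.toLp ∞ ν ℂ φ)

theorem coeFn_mulLp (φ : C(X, ℂ)) (ξ : Lp ℂ 2 ν) : mulLp ν φ ξ =ᵐ[ν] fun x => φ x * ξ x := by
  filter_upwards [(ContinuousLinearMap.mul ℂ ℂ).coeFn_holder (r := 2)
    (ContinuousMap.toLp ∞ ν ℂ φ) ξ, ContinuousMap.coeFn_toLp (p := ∞) (𝕜 := ℂ) ν φ] with x hmul hφ
  exact hmul.trans (congr_arg (· * ξ x) hφ)

end Multiplication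

/-! ### Characters of a compact monoid -/

section Characters

variable {G : Type*} [Monoid G] [TopologicalSpace G]

theorem pontryaginDual_pow_apply (χ : PontryaginDual G) (n : ℕ) (g : G) : (χ ^ n) g = χ g ^ n :=
  ContinuousMonoidHom.pow_apply (A := G) (E := Circle) χ n g

/-- Characters as continuous complex-valued functions, the form in which the Stone–Weierstrass
theorem and the embedding of `C(G, ℂ)` into `Lᵖ` apply to them. -/
def charContinuousMap : PontryaginDual G →* C(G, ℂ) where
  toFun χ := ⟨fun g => (χ g : ℂ), by fun_prop⟩
  map_one' := rfl
  map_mul' _ _ := rfl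

theorem star_charContinuousMap (χ : PontryaginDual G) :
    star (charContinuousMap χ) = charContinuousMap χ⁻¹ :=
  ContinuousMap.ext fun g => (Circle.coe_inv_eq_conj (χ g)).symm

/-- The trigonometric polynomials with frequencies in a group `Γ` of characters. -/
def trigPolynomials (Γ : Subgroup (PontryaginDual G)) : StarSubalgebra ℂ C(G, ℂ) :=
  { Algebra.adjoin ℂ (charContinuousMap '' (Γ : Set (PontryaginDual G))) with
    star_mem' := by
      change Algebra.adjoin ℂ _ ≤ star (Algebra.adjoin ℂ _)
      refine Algebra.adjoin_le ?_
      rintro - ⟨χ, hχ, rfl⟩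
      exact Algebra.subset_adjoin ⟨χ⁻¹, Γ.inv_mem hχ, (star_charContinuousMap χ).symm⟩ }

theorem trigPolynomials_toSubmodule (Γ : Subgroup (PontryaginDual G)) :
    Subalgebra.toSubmodule (trigPolynomials Γ).toSubalgebra =
      Submodule.span ℂ (charContinuousMap '' (Γ : Set (PontryaginDual G))) := by
  refine Algebra.adjoin_eq_span_of_subset ℂ (A := C(G, ℂ)) ?_
  have : charContinuousMap '' (Γ : Set (PontryaginDual G)) = Γ.toSubmonoid.map charContinuousMap :=
    rfl
  rw [this, Submonoid.closure_eq]
  exact Submodule.subset_span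

/-- The characters in `Γ` separate the points of `G`. -/
def SeparatesPoints (Γ : Subgroup (PontryaginDual G)) : Prop :=
  ∀ ⦃g h : G⦄, g ≠ h → ∃ χ ∈ Γ, χ g ≠ χ h

variable [CompactSpace G] {Γ : Subgroup (PontryaginDual G)}

theorem topologicalClosure_span_charContinuousMap (hΓ : SeparatesPoints Γ) :
    (Submodule.span ℂ (charContinuousMap '' (Γ : Set (PontryaginDual G)))).topologicalClosure =
      ⊤ := by
  rw [← trigPolynomials_toSubmodule]
  refine congr_arg (fun A : StarSubalgebra ℂ C(G, ℂ) => Subalgebra.toSubmodule A.toSubalgebra)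
    (ContinuousMap.starSubalgebra_topologicalClosure_eq_top_of_separatesPoints
      (trigPolynomials Γ) fun g h hgh => ?_)
  obtain ⟨χ, hχ, hne⟩ := hΓ hgh
  exact ⟨_, ⟨charContinuousMap χ, Algebra.subset_adjoin ⟨χ, hχ, rfl⟩, rfl⟩,
    fun h => hne (Circle.ext h)⟩

variable [MeasurableSpace G] [BorelSpace G] (ν : Measure G) [IsFiniteMeasure ν]

/-- A character as an element of `L²(ν)`. -/
def charLp (χ : PontryaginDual G) : Lp ℂ 2 ν :=
  ContinuousMap.toLp 2 ν ℂ (charContinuousMap χ)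

theorem coeFn_charLp (χ : PontryaginDual G) : charLp ν χ =ᵐ[ν] fun g => (χ g : ℂ) :=
  ContinuousMap.coeFn_toLp ν (charContinuousMap χ)

theorem dense_span_charLp [NormalSpace G] [ν.WeaklyRegular] (hΓ : SeparatesPoints Γ) :
    Dense (Submodule.span ℂ (charLp ν '' (Γ : Set (PontryaginDual G))) : Set (Lp ℂ 2 ν)) := by
  have h := (ContinuousMap.toLp_denseRange ℂ ν ℂ (p := 2)
    (by simp)).topologicalClosure_map_submodule (topologicalClosure_span_charContinuousMap hΓ)
  rw [Submodule.map_span, ← Set.image_comp] at h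
  exact Submodule.dense_iff_topologicalClosure_eq_top.mpr h

theorem eq_zero_of_inner_charLp_eq_zero [NormalSpace G] [ν.WeaklyRegular] (hΓ : SeparatesPoints Γ)
    {f : Lp ℂ 2 ν} (h : ∀ χ ∈ Γ, inner ℂ (charLp ν χ) f = 0) : f = 0 := by
  refine (dense_span_charLp ν hΓ).eq_zero_of_inner_right ℂ fun v hv => ?_
  have horth : Submodule.span ℂ (charLp ν '' (Γ : Set (PontryaginDual G))) ≤ (ℂ ∙ f)ᗮ := by
    refine Submodule.span_le.mpr ?_
    rintro - ⟨χ, hχ, rfl⟩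
    exact Submodule.mem_orthogonal_singleton_iff_inner_left.mpr (h χ hχ)
  exact Submodule.mem_orthogonal_singleton_iff_inner_left.mp (horth hv)

theorem inner_charLp_charLp (χ ψ : PontryaginDual G) :
    inner ℂ (charLp ν χ) (charLp ν ψ) = ∫ g, ((ψ * χ⁻¹) g : ℂ) ∂ν := by
  rw [L2.inner_def]
  refine integral_congr_ae ?_
  filter_upwards [coeFn_charLp ν χ, coeFn_charLp ν ψ] with g hχ hψ
  rw [hχ, hψ, RCLike.inner_apply, ← Circle.coe_inv_eq_conj, ← Circle.coe_mul]
  rfl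

theorem compMeasurePreserving_charLp {α : G →ₜ* G} (hα : MeasurePreserving α ν ν)
    (χ : PontryaginDual G) :
    Lp.compMeasurePreserving α hα (charLp ν χ) = charLp ν (PontryaginDual.map α χ) :=
  rfl

/-- Multiplication by a character as an operator on `L²(ν)`, multiplicative in the character. -/
def mulChar : PontryaginDual G →* (Lp ℂ 2 ν →L[ℂ] Lp ℂ 2 ν) where
  toFun χ := mulLp ν (charContinuousMap χ)
  map_one' := by
    refine ContinuousLinearMap.ext fun ξ => Lp.ext ?_
    filter_upwards [coeFn_mulLp ν (charContinuousMap 1) ξ] with g h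
    rw [h, map_one, ContinuousMap.one_apply, one_mul, one_apply_eq_self]
  map_mul' χ ψ := by
    refine ContinuousLinearMap.ext fun ξ => Lp.ext ?_
    filter_upwards [coeFn_mulLp ν (charContinuousMap (χ * ψ)) ξ,
      coeFn_mulLp ν (charContinuousMap χ) (mulLp ν (charContinuousMap ψ) ξ),
      coeFn_mulLp ν (charContinuousMap ψ) ξ] with g h h₁ h₂
    rw [h, map_mul, ContinuousMap.mul_apply, mul_apply_eq_comp, h₁, h₂, mul_assoc]

theorem coeFn_mulChar (χ : PontryaginDual G) (ξ : Lp ℂ 2 ν) :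
    mulChar ν χ ξ =ᵐ[ν] fun g => (χ g : ℂ) * ξ g :=
  coeFn_mulLp ν (charContinuousMap χ) ξ

theorem mulChar_charLp_one (χ : PontryaginDual G) : mulChar ν χ (charLp ν 1) = charLp ν χ := by
  refine Lp.ext ?_
  filter_upwards [coeFn_mulChar ν χ (charLp ν 1), coeFn_charLp ν 1, coeFn_charLp ν χ]
    with g hmul h1 hχ
  rw [hmul, h1, hχ, PontryaginDual.one_apply, Circle.coe_one, mul_one]

theorem coeFn_apply_of_commute_mulChar [NormalSpace G] [ν.WeaklyRegular] (hΓ : SeparatesPoints Γ)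
    {P : Lp ℂ 2 ν →L[ℂ] Lp ℂ 2 ν} (hP : ∀ χ ∈ Γ, Commute P (mulChar ν χ)) (ξ : Lp ℂ 2 ν) :
    P ξ =ᵐ[ν] fun g => P (charLp ν 1) g * ξ g := by
  -- `P 1` is only in `L²`, so the products are compared in `L¹`, by continuity in `ξ`.
  let B := (ContinuousLinearMap.mul ℂ ℂ).holderL ν 2 2 1
  have hB (f₁ f₂ : Lp ℂ 2 ν) : B f₁ f₂ =ᵐ[ν] fun g => f₁ g * f₂ g :=
    (ContinuousLinearMap.mul ℂ ℂ).coeFn_holder f₁ f₂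
  have hPχ (χ) (hχ : χ ∈ Γ) : P (charLp ν χ) = mulChar ν χ (P (charLp ν 1)) := by
    rw [← mulChar_charLp_one]
    exact DFunLike.congr_fun (hP χ hχ).eq (charLp ν 1)
  have hext : B (charLp ν 1) ∘L P = B (P (charLp ν 1)) := by
    refine ContinuousLinearMap.ext_on (dense_span_charLp ν hΓ) ?_
    rintro - ⟨χ, hχ, rfl⟩
    refine Lp.ext ?_
    filter_upwards [hB (charLp ν 1) (P (charLp ν χ)), hB (P (charLp ν 1)) (charLp ν χ),
      coeFn_charLp ν 1, coeFn_charLp ν χ, coeFn_mulChar ν χ (P (charLp ν 1))]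
      with g hl hr h1 hg hmul
    rw [ContinuousLinearMap.comp_apply, hl, hr, h1, hg, hPχ χ hχ, hmul, PontryaginDual.one_apply,
      Circle.coe_one, one_mul, mul_comm]
  filter_upwards [hB (charLp ν 1) (P ξ), hB (P (charLp ν 1)) ξ, coeFn_charLp ν 1] with g hl hr h1
  rw [← hr, ← hext, ContinuousLinearMap.comp_apply, hl, h1, PontryaginDual.one_apply,
    Circle.coe_one, one_mul]

variable {ν} {α : G →ₜ* G} {hα : MeasurePreserving α ν ν} {f : Lp ℂ 2 ν}

theorem inner_charLp_map (hf : Lp.compMeasurePreserving α hα f = f) (χ : PontryaginDual G) :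
    inner ℂ (charLp ν (PontryaginDual.map α χ)) f = inner ℂ (charLp ν χ) f := by
  rw [← compMeasurePreserving_charLp ν hα]
  nth_rw 1 [← hf]
  exact LinearIsometry.inner_map_map (𝕜 := ℂ)
    (Lp.compMeasurePreservingₗᵢ ℂ α hα : Lp ℂ 2 ν →ₗᵢ[ℂ] Lp ℂ 2 ν) (charLp ν χ) f

theorem inner_charLp_iterate_map (hf : Lp.compMeasurePreserving α hα f = f) (χ : PontryaginDual G)
    (n : ℕ) : inner ℂ (charLp ν ((PontryaginDual.map α)^[n] χ)) f = inner ℂ (charLp ν χ) f := by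
  induction n with
  | zero => rfl
  | succ n ih => rw [Function.iterate_succ_apply', inner_charLp_map hf, ih]

end Characters

/-! ### Ergodic endomorphisms of compact groups -/

section Ergodic

variable {G : Type*} [Group G] [TopologicalSpace G] [MeasurableSpace G] [BorelSpace G]
  {μ : Measure G}

theorem integral_char_eq_zero [IsTopologicalGroup G] [μ.IsMulLeftInvariant] {χ : PontryaginDual G}
    (hχ : χ ≠ 1) : ∫ g, (χ g : ℂ) ∂μ = 0 := by
  obtain ⟨a, ha⟩ : ∃ a, χ a ≠ 1 := not_forall.mp fun h => hχ (PontryaginDual.ext h)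
  have translate : (χ a : ℂ) * ∫ g, (χ g : ℂ) ∂μ = ∫ g, (χ g : ℂ) ∂μ := by
    rw [← integral_const_mul]
    simpa only [map_mul, Circle.coe_mul] using integral_mul_left_eq_self (fun g => (χ g : ℂ)) a
  exact (mul_left_eq_self₀.mp translate).resolve_left fun h => ha (Circle.ext h)

variable [IsTopologicalGroup G] [CompactSpace G] [IsProbabilityMeasure μ]
  [μ.IsMulLeftInvariant]

theorem orthonormal_charLp : Orthonormal ℂ (charLp μ : PontryaginDual G → Lp ℂ 2 μ) := by
  classical
  rw [orthonormal_iff_ite]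
  intro χ ψ
  rw [inner_charLp_charLp]
  split_ifs with h
  · simp [h]
  · exact integral_char_eq_zero (mul_inv_eq_one.not.mpr (Ne.symm h))

theorem measurePreserving_of_surjective (α : G →ₜ* G) (hα : Function.Surjective α) :
    MeasurePreserving α μ μ := by
  have : μ.IsHaarMeasure := Measure.isHaarMeasure_of_isCompact_nonempty_interior μ Set.univ
    isCompact_univ (by simp) (by simp) (by simp)
  exact α.toMonoidHom.measurePreserving α.continuous_toFun hα rfl

variable {α : G →ₜ* G} {hα : MeasurePreserving α μ μ} {f : Lp ℂ 2 μ}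

theorem inner_charLp_eq_zero (hf : Lp.compMeasurePreserving α hα f = f) {χ : PontryaginDual G}
    (hχ : (Set.range fun n : ℕ => (PontryaginDual.map α)^[n] χ).Infinite) :
    inner ℂ (charLp μ χ) f = 0 := by
  have := hχ.to_subtype
  have hbessel := (orthonormal_charLp (μ := μ).comp _
    (Subtype.val_injective (p := (· ∈ Set.range fun n : ℕ => (PontryaginDual.map α)^[n] χ))))
      |>.inner_products_summable f
  have hconst (ψ : Set.range fun n : ℕ => (PontryaginDual.map α)^[n] χ) :
      ‖inner ℂ (charLp μ ψ) f‖ ^ 2 = ‖inner ℂ (charLp μ χ) f‖ ^ 2 := by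
    obtain ⟨-, n, rfl⟩ := ψ
    rw [inner_charLp_iterate_map hf]
  simpa [hconst, summable_const_iff] using hbessel

theorem eq_smul_charLp_one [μ.WeaklyRegular] {Γ : Subgroup (PontryaginDual G)}
    (hΓ : SeparatesPoints Γ)
    (horbit : ∀ χ ∈ Γ, χ ≠ 1 → (Set.range fun n : ℕ => (PontryaginDual.map α)^[n] χ).Infinite)
    (hf : Lp.compMeasurePreserving α hα f = f) :
    f = inner ℂ (charLp μ 1) f • charLp μ 1 := by
  classical
  refine sub_eq_zero.mp (eq_zero_of_inner_charLp_eq_zero μ hΓ fun χ hχ => ?_)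
  rw [inner_sub_right, inner_smul_right, orthonormal_iff_ite.mp orthonormal_charLp]
  split_ifs with h
  · rw [h, mul_one, sub_self]
  · rw [mul_zero, sub_zero, inner_charLp_eq_zero hf (horbit χ hχ h)]

theorem eventuallyConst_of_invariant [μ.WeaklyRegular] {Γ : Subgroup (PontryaginDual G)}
    (hΓ : SeparatesPoints Γ)
    (horbit : ∀ χ ∈ Γ, χ ≠ 1 → (Set.range fun n : ℕ => (PontryaginDual.map α)^[n] χ).Infinite)
    (hf : Lp.compMeasurePreserving α hα f = f) : EventuallyConst f (ae μ) := by
  rw [eq_smul_charLp_one hΓ horbit hf]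
  refine (EventuallyConst.const (inner ℂ (charLp μ 1) f)).congr ?_
  filter_upwards [Lp.coeFn_smul (inner ℂ (charLp μ 1) f) (charLp μ 1), coeFn_charLp μ 1]
    with g hsmul h1
  rw [hsmul, Pi.smul_apply, h1, PontryaginDual.one_apply, Circle.coe_one, smul_eq_mul, mul_one]

theorem ergodic_of_infinite_orbits [μ.WeaklyRegular] {Γ : Subgroup (PontryaginDual G)}
    (hΓ : SeparatesPoints Γ) (hα : MeasurePreserving α μ μ)
    (horbit : ∀ χ ∈ Γ, χ ≠ 1 → (Set.range fun n : ℕ => (PontryaginDual.map α)^[n] χ).Infinite) :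
    Ergodic α μ where
  toMeasurePreserving := hα
  aeconst_set s hs hinv := by
    have hind : Lp.compMeasurePreserving α hα (indicatorConstLp 2 hs (by simp) (1 : ℂ)) =
        indicatorConstLp 2 hs (by simp) 1 := by
      rw [Lp.indicatorConstLp_compMeasurePreserving]
      simp only [hinv]
    have hconst := eventuallyConst_of_invariant hΓ horbit hind
    refine ((hconst.congr indicatorConstLp_coeFn).comp (· = 1)).congr (.of_forall fun g => ?_)
    change (s.indicator (fun _ => (1 : ℂ)) g = 1) = (g ∈ s)
    simp [Set.indicator]

end Ergodic

/-! ### The solenoid -/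

section Solenoid

variable (N : ℕ)

theorem isClosed_solenoidGroup : IsClosed (solenoidGroup N : Set (ℤ → Circle)) := by
  have h : (solenoidGroup N : Set (ℤ → Circle)) =
      ⋂ n : ℤ, {z : ℤ → Circle | z (n + 1) ^ N = z n} := by
    ext z
    simp only [Set.mem_iInter]
    rfl
  rw [h]
  exact isClosed_iInter fun n => isClosed_eq (by fun_prop) (by fun_prop)

instance : CompactSpace (Solenoid N) :=
  isCompact_iff_compactSpace.mp (isClosed_solenoidGroup N).isCompact

instance : TopologicalSpace.PseudoMetrizableSpace (Solenoid N) :=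
  Topology.IsInducing.subtypeVal.pseudoMetrizableSpace

theorem shift_eq_pow (z : Solenoid N) : shift N z = z ^ N := by
  refine Subtype.ext (funext fun n => ?_)
  rw [SubgroupClass.coe_pow, Pi.pow_apply, ← sub_add_cancel n 1, z.2 (n - 1), sub_add_cancel]
  rfl

variable {N} in
theorem continuous_coord (n : ℤ) : Continuous fun z : Solenoid N => z.val n :=
  (continuous_apply n).comp continuous_subtype_val

/-- The shift as an automorphism of the topological group `S_N`. -/
def shiftEquiv : Solenoid N ≃ₜ* Solenoid N where
  toFun := shift N
  invFun := shiftInv N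
  left_inv z := Subtype.ext (funext fun n => congr_arg z.val (add_sub_cancel_right n 1))
  right_inv z := Subtype.ext (funext fun n => congr_arg z.val (sub_add_cancel n 1))
  map_mul' _ _ := rfl
  continuous_toFun := .subtype_mk (continuous_pi fun n => continuous_coord (n - 1)) _
  continuous_invFun := .subtype_mk (continuous_pi fun n => continuous_coord (n + 1)) _

variable {N}

theorem map_shift_eq_pow (χ : PontryaginDual (Solenoid N)) :
    PontryaginDual.map (shiftEquiv N : Solenoid N →ₜ* Solenoid N) χ = χ ^ N :=
  PontryaginDual.ext fun z => by
    rw [pontryaginDual_pow_apply, ← map_pow, ← shift_eq_pow]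
    rfl

theorem iterate_map_shift_eq_pow (χ : PontryaginDual (Solenoid N)) (n : ℕ) :
    (PontryaginDual.map (shiftEquiv N : Solenoid N →ₜ* Solenoid N))^[n] χ = χ ^ N ^ n := by
  induction n with
  | zero => simp
  | succ n ih => rw [Function.iterate_succ_apply', ih, map_shift_eq_pow, ← pow_mul, pow_succ]

/-- The coordinate character `z ↦ z n` of the solenoid. -/
def coordChar (n : ℤ) : PontryaginDual (Solenoid N) where
  toFun z := z.val n
  map_one' := rfl
  map_mul' _ _ := rfl
  continuous_toFun := continuous_coord n

theorem coordChar_add_one_pow (n : ℤ) :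
    coordChar (n + 1) ^ N = (coordChar n : PontryaginDual (Solenoid N)) :=
  PontryaginDual.ext fun z => (pontryaginDual_pow_apply _ N z).trans (z.2 n)

variable (N) in
/-- The group of characters `z ↦ z n ^ k` of the solenoid, isomorphic to `ℤ[1/N]` when `N ≥ 1`. -/
def coordCharGroup : Subgroup (PontryaginDual (Solenoid N)) :=
  ⨆ n : ℤ, Subgroup.zpowers (coordChar n)

theorem monotone_zpowers_coordChar :
    Monotone fun n : ℤ => Subgroup.zpowers (coordChar n : PontryaginDual (Solenoid N)) :=
  monotone_int_of_le_succ fun n => Subgroup.zpowers_le.mpr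
    (coordChar_add_one_pow n ▸ Subgroup.npow_mem_zpowers _ N)

theorem mem_coordCharGroup {χ : PontryaginDual (Solenoid N)} :
    χ ∈ coordCharGroup N ↔ ∃ n k : ℤ, coordChar n ^ k = χ :=
  Subgroup.mem_iSup_of_directed monotone_zpowers_coordChar.directed_le

theorem coordChar_mem_coordCharGroup (n : ℤ) : coordChar n ∈ coordCharGroup N :=
  mem_coordCharGroup.mpr ⟨n, 1, zpow_one _⟩

theorem separatesPoints_coordCharGroup : SeparatesPoints (coordCharGroup N) := by
  intro z w hzw
  obtain ⟨n, hn⟩ := Function.ne_iff.mp (Subtype.coe_ne_coe.mpr hzw)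
  exact ⟨coordChar n, coordChar_mem_coordCharGroup n, hn⟩

theorem surjective_coordChar [NeZero N] (n : ℤ) :
    Function.Surjective (coordChar n : PontryaginDual (Solenoid N)) := by
  intro w
  obtain ⟨t, rfl⟩ := Circle.exp_surjective w
  refine ⟨⟨fun j => Circle.exp (t * (N : ℝ) ^ (n - j)), fun j => ?_⟩, ?_⟩
  · have hN : (N : ℝ) ≠ 0 := NeZero.ne _
    rw [← Circle.exp_nsmul, nsmul_eq_mul, mul_left_comm, ← zpow_one_add₀ hN]
    congr 3
    ring
  · change Circle.exp (t * (N : ℝ) ^ (n - n)) = Circle.exp t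
    rw [sub_self, zpow_zero, mul_one]

theorem not_isOfFinOrder_coordChar [NeZero N] (n : ℤ) :
    ¬ IsOfFinOrder (coordChar n : PontryaginDual (Solenoid N)) := by
  rw [isOfFinOrder_iff_pow_eq_one]
  rintro ⟨k, hk, h⟩
  obtain ⟨z, hz⟩ := surjective_coordChar (N := N) n (Circle.exp (Real.pi / k))
  have hpow : coordChar n z ^ k = 1 := by
    rw [← pontryaginDual_pow_apply, h, PontryaginDual.one_apply]
  rw [hz, ← Circle.exp_nsmul, nsmul_eq_mul, mul_div_cancel₀ _ (by positivity)] at hpow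
  exact Circle.exp_pi_ne_one hpow

theorem not_isOfFinOrder_of_mem_coordCharGroup [NeZero N] {χ : PontryaginDual (Solenoid N)}
    (hχ : χ ∈ coordCharGroup N) (h1 : χ ≠ 1) : ¬ IsOfFinOrder χ := by
  obtain ⟨n, k, rfl⟩ := mem_coordCharGroup.mp hχ
  have hk : k ≠ 0 := fun hk => h1 (hk ▸ zpow_zero _)
  rw [isOfFinOrder_iff_zpow_eq_one]
  rintro ⟨m, hm, h⟩
  exact not_isOfFinOrder_coordChar n (isOfFinOrder_iff_zpow_eq_one.mpr
    ⟨k * m, mul_ne_zero hk hm, (zpow_mul _ k m).trans h⟩)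

theorem infinite_orbit_of_mem_coordCharGroup (hN : 2 ≤ N) {χ : PontryaginDual (Solenoid N)}
    (hχ : χ ∈ coordCharGroup N) (h1 : χ ≠ 1) :
    (Set.range fun n : ℕ =>
      (PontryaginDual.map (shiftEquiv N : Solenoid N →ₜ* Solenoid N))^[n] χ).Infinite := by
  have : NeZero N := ⟨by omega⟩
  simp only [iterate_map_shift_eq_pow]
  exact Set.infinite_range_of_injective ((injective_pow_iff_not_isOfFinOrder.mpr
    (not_isOfFinOrder_of_mem_coordCharGroup hχ h1)).comp (Nat.pow_right_injective hN))

theorem ergodic_shift (hN : 2 ≤ N) (μ : Measure (Solenoid N)) [IsProbabilityMeasure μ]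
    [μ.IsMulLeftInvariant] : Ergodic (shift N) μ :=
  ergodic_of_infinite_orbits separatesPoints_coordCharGroup
    (measurePreserving_of_surjective (shiftEquiv N : Solenoid N →ₜ* Solenoid N)
      (shiftEquiv N).surjective)
    fun _ => infinite_orbit_of_mem_coordCharGroup hN

theorem measShift_eq_self (μ : Measure (Solenoid N)) [IsProbabilityMeasure μ]
    [μ.IsMulLeftInvariant] : measShift N μ = μ :=
  (measurePreserving_of_surjective ((shiftEquiv N).symm : Solenoid N →ₜ* Solenoid N)
    (shiftEquiv N).symm.surjective).map_eq

theorem shiftErgodic_iff_preErgodic {ν : Measure (Solenoid N)} :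
    ShiftErgodic N ν ↔ PreErgodic (shift N) ν :=
  ⟨fun h => ⟨fun _ hs hinv => eventuallyConst_set_ae_iff.mpr (h _ hs hinv)⟩,
    fun h _ hs hinv => eventuallyConst_set_ae_iff.mp (h.aeconst_set hs hinv)⟩

end Solenoid

/-! ### The representation `π_{ν,θ}` -/

section Representation

variable {N : ℕ} {ν : Measure (Solenoid N)}

theorem QuasiInvariant.quasiMeasurePreserving (hν : QuasiInvariant N ν) :
    Measure.QuasiMeasurePreserving (shift N) ν ν := by
  have hS : Measurable (shift N) := (shiftEquiv N).continuous_toFun.measurable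
  have hS' : Measurable (shiftInv N) := (shiftEquiv N).continuous_invFun.measurable
  refine ⟨hS, ?_⟩
  calc ν.map (shift N) ≪ (measShift N ν).map (shift N) := hν.2.map hS
    _ = ν := by
      rw [measShift, Measure.map_map hS hS', show shift N ∘ shiftInv N = id from
        funext (shiftEquiv N).right_inv, Measure.map_id]

variable [IsFiniteMeasure ν]

theorem QuasiInvariant.ae_sqrt_rnDeriv_ne_zero (hν : QuasiInvariant N ν) :
    ∀ᵐ z ∂ν, √((measShift N ν).rnDeriv ν z).toReal ≠ 0 := by
  have : IsFiniteMeasure (measShift N ν) := by unfold measShift; infer_instance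
  filter_upwards [Measure.rnDeriv_pos' hν.2, (measShift N ν).rnDeriv_lt_top ν] with z hpos hlt
  exact (Real.sqrt_pos.mpr (ENNReal.toReal_pos hpos.ne' hlt.ne)).ne'

namespace IsPiNuTheta

variable {θ : Solenoid N → Circle} {U T : unitary (Lp ℂ 2 ν →L[ℂ] Lp ℂ 2 ν)}
  {P : Lp ℂ 2 ν →L[ℂ] Lp ℂ 2 ν}

theorem eq_mulChar (h : IsPiNuTheta N ν θ U T) :
    (T : Lp ℂ 2 ν →L[ℂ] Lp ℂ 2 ν) = mulChar ν (coordChar 0) :=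
  ContinuousLinearMap.ext fun ξ => Lp.ext ((h.2 ξ).trans (coeFn_mulChar ν (coordChar 0) ξ).symm)

theorem mul_mulChar (h : IsPiNuTheta N ν θ U T) (hν : QuasiInvariant N ν)
    (χ : PontryaginDual (Solenoid N)) :
    (U : Lp ℂ 2 ν →L[ℂ] Lp ℂ 2 ν) * mulChar ν χ = mulChar ν (χ ^ N) * U := by
  refine ContinuousLinearMap.ext fun ξ => Lp.ext ?_
  filter_upwards [h.1 (mulChar ν χ ξ), hν.quasiMeasurePreserving.ae (coeFn_mulChar ν χ ξ),
    coeFn_mulChar ν (χ ^ N) ((U : Lp ℂ 2 ν →L[ℂ] Lp ℂ 2 ν) ξ), h.1 ξ] with z hl hχ hr hU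
  rw [mul_apply_eq_comp, mul_apply_eq_comp, hl, hχ, hr, hU, shift_eq_pow, map_pow,
    pontryaginDual_pow_apply]
  ring

theorem commute_mulChar_coordChar_add_one_iff (h : IsPiNuTheta N ν θ U T) (hν : QuasiInvariant N ν)
    (hPU : Commute P U) (n : ℤ) :
    Commute P (mulChar ν (coordChar (n + 1))) ↔ Commute P (mulChar ν (coordChar n)) :=
  commute_iff_of_semiconjBy_unit (u := Unitary.toUnits U) hPU <|
    (h.mul_mulChar hν (coordChar (n + 1))).trans (by rw [coordChar_add_one_pow]; rfl)

theorem commute_mulChar_coordChar (h : IsPiNuTheta N ν θ U T) (hν : QuasiInvariant N ν)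
    (hPT : Commute P T) (hPU : Commute P U) (n : ℤ) : Commute P (mulChar ν (coordChar n)) := by
  induction n with
  | zero => exact h.eq_mulChar ▸ hPT
  | succ n ih => exact (h.commute_mulChar_coordChar_add_one_iff hν hPU n).mpr ih
  | pred n ih =>
    rw [← h.commute_mulChar_coordChar_add_one_iff hν hPU, sub_add_cancel]
    exact ih

theorem commute_mulChar (h : IsPiNuTheta N ν θ U T) (hν : QuasiInvariant N ν)
    (hPT : Commute P T) (hPU : Commute P U) {χ : PontryaginDual (Solenoid N)}
    (hχ : χ ∈ coordCharGroup N) : Commute P (mulChar ν χ) := by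
  obtain ⟨n, k, rfl⟩ := mem_coordCharGroup.mp hχ
  have := (show Commute P ((mulChar ν).toHomUnits (coordChar n)) from
    h.commute_mulChar_coordChar hν hPT hPU n).units_zpow_right k
  rwa [← map_zpow] at this

theorem comp_shift_ae_eq (h : IsPiNuTheta N ν θ U T) (hν : QuasiInvariant N ν) {φ : Solenoid N → ℂ}
    (hφ : ∀ ξ, P ξ =ᵐ[ν] fun z => φ z * ξ z) (hPU : Commute P U) : φ ∘ shift N =ᵐ[ν] φ := by
  have hS := hν.quasiMeasurePreserving
  filter_upwards [hφ ((U : Lp ℂ 2 ν →L[ℂ] Lp ℂ 2 ν) (charLp ν 1)), h.1 (charLp ν 1),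
    h.1 (P (charLp ν 1)), hS.ae (hφ (charLp ν 1)), hS.ae (coeFn_charLp ν 1),
    hν.ae_sqrt_rnDeriv_ne_zero] with z hPU1 hU1 hUP1 hP1 h1 hΔ
  have hcomm : P ((U : Lp ℂ 2 ν →L[ℂ] Lp ℂ 2 ν) (charLp ν 1)) =
      (U : Lp ℂ 2 ν →L[ℂ] Lp ℂ 2 ν) (P (charLp ν 1)) := DFunLike.congr_fun hPU.eq (charLp ν 1)
  rw [hcomm, hUP1, hU1, hP1, h1, PontryaginDual.one_apply, Circle.coe_one, mul_one, mul_one,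
    mul_comm (φ z)] at hPU1
  exact mul_left_cancel₀ (mul_ne_zero (Complex.ofReal_ne_zero.mpr hΔ) (θ z).coe_ne_zero) hPU1

theorem exists_eq_smul (h : IsPiNuTheta N ν θ U T) (hν : QuasiInvariant N ν)
    (hergodic : ShiftErgodic N ν) (hPT : Commute P T) (hPU : Commute P U) :
    ∃ c : ℂ, ∀ ξ, P ξ = c • ξ := by
  have hP := coeFn_apply_of_commute_mulChar ν separatesPoints_coordCharGroup
    fun χ hχ => h.commute_mulChar hν hPT hPU hχ
  have hquasi : QuasiErgodic (shift N) ν :=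
    ⟨hν.quasiMeasurePreserving, shiftErgodic_iff_preErgodic.mp hergodic⟩
  obtain ⟨c, hc⟩ := hquasi.ae_eq_const_of_ae_eq_comp_ae (Lp.aestronglyMeasurable _)
    (h.comp_shift_ae_eq hν hP hPU)
  refine ⟨c, fun ξ => Lp.ext ?_⟩
  filter_upwards [hP ξ, hc, Lp.coeFn_smul c ξ] with z hPξ hcz hsmul
  rw [hPξ, hcz, hsmul]
  rfl

theorem eq_bot_or_eq_top (h : IsPiNuTheta N ν θ U T) (hν : QuasiInvariant N ν)
    (hergodic : ShiftErgodic N ν) {K : Submodule ℂ (Lp ℂ 2 ν)}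
    (hKc : IsClosed (K : Set (Lp ℂ 2 ν)))
    (hK : ∀ g ∈ Subgroup.closure ({U, T} : Set (unitary (Lp ℂ 2 ν →L[ℂ] Lp ℂ 2 ν))),
      ∀ v ∈ K, (g : Lp ℂ 2 ν →L[ℂ] Lp ℂ 2 ν) v ∈ K) : K = ⊥ ∨ K = ⊤ := by
  have := hKc.completeSpace_coe
  have hcomm : ∀ g ∈ Subgroup.closure ({U, T} : Set (unitary (Lp ℂ 2 ν →L[ℂ] Lp ℂ 2 ν))),
      Commute K.starProjection (g : Lp ℂ 2 ν →L[ℂ] Lp ℂ 2 ν) :=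
    fun g hg => commute_starProjection (hK g hg) (hK g⁻¹ (inv_mem hg))
  obtain ⟨c, hc⟩ := h.exists_eq_smul hν hergodic (hcomm T (Subgroup.subset_closure (by simp)))
    (hcomm U (Subgroup.subset_closure (by simp)))
  exact eq_bot_or_eq_top_of_starProjection_eq_smul hc

end IsPiNuTheta

end Representation

theorem statement_5_general (N : ℕ) (hN : 2 ≤ N) (μS : Measure (Solenoid N))
    [IsProbabilityMeasure μS] (hhaar : ∀ g : Solenoid N, μS.map (fun z => g * z) = μS)
    (θ : Solenoid N → Circle) :
    measShift N μS = μS ∧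
    ShiftErgodic N μS ∧
    (∀ U T : unitary (Lp ℂ 2 μS →L[ℂ] Lp ℂ 2 μS),
      IsPiNuTheta N μS θ U T →
      ∀ K : Submodule ℂ (Lp ℂ 2 μS), IsClosed (K : Set (Lp ℂ 2 μS)) →
        (∀ g ∈ Subgroup.closure ({U, T} : Set (unitary (Lp ℂ 2 μS →L[ℂ] Lp ℂ 2 μS))),
          ∀ v ∈ K, (g : Lp ℂ 2 μS →L[ℂ] Lp ℂ 2 μS) v ∈ K) →
        K = ⊥ ∨ K = ⊤) := by
  have : μS.IsMulLeftInvariant := ⟨hhaar⟩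
  have hinv : measShift N μS = μS := measShift_eq_self μS
  have hergodic : ShiftErgodic N μS :=
    shiftErgodic_iff_preErgodic.mpr (ergodic_shift hN μS).toPreErgodic
  have hquasi : QuasiInvariant N μS := by rw [QuasiInvariant, hinv]; exact ⟨.rfl, .rfl⟩
  exact ⟨hinv, hergodic, fun U T h K hKc hK => h.eq_bot_or_eq_top hquasi hergodic hKc hK⟩

end

open MeasureTheory Real Complex Filter Finset in
/-- Example 2.6. The Haar measure `μ_{S_N}` of the solenoid
(the translation-invariant probability measure) is invariant under the shift `S`,
the shift is ergodic with respect to it, and consequently the representation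
`π_{μ_{S_N},1}` of `BS(1,N)` on `L²(μ_{S_N})` is irreducible. -/
theorem statement_5 (N : ℕ) (hN : 2 ≤ N)
    (μS : Measure (Solenoid N)) [IsProbabilityMeasure μS]
    (hhaar : ∀ g : Solenoid N, μS.map (fun z => g * z) = μS) :
    -- invariance of Haar measure under the shift:  μ ∘ S = μ
    measShift N μS = μS ∧
    -- ergodicity of the shift with respect to Haar measure
    ShiftErgodic N μS ∧
    -- irreducibility of the representation `π_{μS, 1}`:
    -- every closed invariant subspace is trivial
    (∀ U T : unitary (Lp ℂ 2 μS →L[ℂ] Lp ℂ 2 μS),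
      IsPiNuTheta N μS (fun _ => 1) U T →
      ∀ K : Submodule ℂ (Lp ℂ 2 μS), IsClosed (K : Set (Lp ℂ 2 μS)) →
        (∀ g ∈ Subgroup.closure ({U, T} : Set (unitary (Lp ℂ 2 μS →L[ℂ] Lp ℂ 2 μS))),
          ∀ v ∈ K, (g : Lp ℂ 2 μS →L[ℂ] Lp ℂ 2 μS) v ∈ K) →
        K = ⊥ ∨ K = ⊤) :=
  statement_5_general N hN μS hhaar fun _ => 1
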